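/- Let χ : K^× → ℤ/2ℤ be a group homomorphism and n ≥ 1 an integer such that χ vanishes on U_{n+1}. Suppose e₁/e₂ ∈ U_{2n+1} (i.e. v(e₁−e₂) ≥ 2n+1) and χ(e₁) = χ(e₂) = 0. If x ∈ K^× satisfies x ≠ e₁, x ≠ e₂, −n ≤ v(x) ≤ n, and χ(x) = 1, then χ(x−e₁) = χ(x−e₂); in particular χ(x(x−e₁)(x−e₂)) = 1. -/

import Mathlib

/-- An additively written, normalized (i.e. surjective onto `ℤ`) discrete
valuation on a field `K`.  All axioms are imposed at nonzero arguments only,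
so the value of `v` at `0` is irrelevant.  For a finite extension `K` of
`ℚ_[p]`, the normalized valuation `v : K^× → ℤ` of the paper is such a
structure. -/
structure DValuation (K : Type*) [Field K] where
  /-- the valuation map -/
  v : K → ℤ
  v_mul : ∀ ⦃x y : K⦄, x ≠ 0 → y ≠ 0 → v (x * y) = v x + v y
  min_le_v_add : ∀ ⦃x y : K⦄, x ≠ 0 → y ≠ 0 → x + y ≠ 0 → min (v x) (v y) ≤ v (x + y)
  v_surj : ∀ m : ℤ, ∃ x : K, x ≠ 0 ∧ v x = m

namespace DValuation

variable {K : Type*} [Field K] (w : DValuation K)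

/-- `u ∈ U_m` : `u` is (a unit) congruent to `1` modulo `𝔭^m`; for `m ≥ 1`
this forces `v u = 0`, i.e. `u ∈ 𝔬^×`. -/
def IsUnit₁ (m : ℤ) (u : K) : Prop :=
  u = 1 ∨ m ≤ w.v (u - 1)

end DValuation

/-!
Since `χ x ≠ χ e₂`, the quotient `x / e₂` does not lie in `U_{n+1}`, so `v (x / e₂ - 1) ≤ n`.
Together with `v (e₁ / e₂ - 1) ≥ 2n + 1` and the identity
`(x - e₁) / (x - e₂) - 1 = -((e₁ / e₂ - 1) / (x / e₂ - 1))`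
this puts `(x - e₁) / (x - e₂)` into `U_{n+1}`, on which `χ` vanishes.
-/

namespace DValuation

variable {K : Type*} [Field K] (w : DValuation K)

theorem v_one : w.v 1 = 0 := by
  simpa using w.v_mul (one_ne_zero (α := K)) one_ne_zero

theorem v_neg {x : K} (hx : x ≠ 0) : w.v (-x) = w.v x := by
  have hsq : w.v (-x) + w.v (-x) = w.v x + w.v x := by
    rw [← w.v_mul (neg_ne_zero.mpr hx) (neg_ne_zero.mpr hx), neg_mul_neg, w.v_mul hx hx]
  omega

theorem v_div {x y : K} (hx : x ≠ 0) (hy : y ≠ 0) : w.v (x / y) = w.v x - w.v y := by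
  rw [eq_sub_iff_add_eq, ← w.v_mul (div_ne_zero hx hy) hy, div_mul_cancel₀ x hy]

variable {w}

theorem IsUnit₁.ne_zero {m : ℤ} {u : K} (hu : w.IsUnit₁ m u) (hm : 0 < m) : u ≠ 0 := by
  rintro rfl
  rcases hu with h01 | hv
  · exact zero_ne_one h01
  · rw [zero_sub, w.v_neg one_ne_zero, w.v_one] at hv
    exact hm.not_ge hv

theorem IsUnit₁.sub_div_sub {k m : ℤ} {a b x : K} (hb : b ≠ 0)
    (hab : w.IsUnit₁ (k + m) (a / b)) (hxb : ¬ w.IsUnit₁ (k + 1) (x / b)) :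
    w.IsUnit₁ m ((x - a) / (x - b)) := by
  obtain ⟨hx, hvx⟩ : x / b ≠ 1 ∧ w.v (x / b - 1) < k + 1 := by
    simpa only [IsUnit₁, not_or, not_le] using hxb
  have hxb₀ : x - b ≠ 0 := sub_ne_zero.mpr fun h ↦ hx ((div_eq_one_iff_eq hb).mpr h)
  by_cases ha : a / b = 1
  · left
    rw [(div_eq_one_iff_eq hb).mp ha, div_self hxb₀]
  · right
    have hva : k + m ≤ w.v (a / b - 1) := hab.resolve_left ha
    have hquot : (x - a) / (x - b) - 1 = -((a / b - 1) / (x / b - 1)) := by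
      rw [div_sub_one hb, div_sub_one hb, div_div_div_cancel_right₀ hb, div_sub_one hxb₀,
        ← neg_div, sub_sub_sub_cancel_left, neg_sub]
    have ha₁ : a / b - 1 ≠ 0 := sub_ne_zero.mpr ha
    have hx₁ : x / b - 1 ≠ 0 := sub_ne_zero.mpr hx
    rw [hquot, w.v_neg (div_ne_zero ha₁ hx₁), w.v_div ha₁ hx₁]
    omega

theorem map_eq_map_of_isUnit₁_div {G : Type*} [AddZeroClass G] {χ : K → G}
    (hχ : ∀ ⦃x y : K⦄, x ≠ 0 → y ≠ 0 → χ (x * y) = χ x + χ y) {m : ℤ} (hm : 0 < m)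
    (hvan : ∀ u : K, w.IsUnit₁ m u → χ u = 0) {a b : K} (hb : b ≠ 0)
    (hab : w.IsUnit₁ m (a / b)) : χ a = χ b := by
  calc χ a = χ (b * (a / b)) := by rw [mul_div_cancel₀ a hb]
    _ = χ b + χ (a / b) := hχ hb (hab.ne_zero hm)
    _ = χ b := by rw [hvan _ hab, add_zero]

end DValuation

theorem chatelet_case_i_key_general {K G : Type*} [Field K] {w : DValuation K}
    [AddCommGroup G] [Module (ZMod 2) G] {χ : K → G}
    (hχ : ∀ ⦃x y : K⦄, x ≠ 0 → y ≠ 0 → χ (x * y) = χ x + χ y) {n : ℕ}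
    (hvan : ∀ u : K, w.IsUnit₁ ((n : ℤ) + 1) u → χ u = 0)
    {e₁ e₂ : K} (he₂ : e₂ ≠ 0) (hcong : w.IsUnit₁ (2 * (n : ℤ) + 1) (e₁ / e₂))
    {x : K} (hx : x ≠ 0) (hχx : χ x ≠ χ e₂) :
    χ (x - e₁) = χ (x - e₂) ∧ χ (x * (x - e₁) * (x - e₂)) = χ x := by
  have hn : 0 < (n : ℤ) + 1 := by positivity
  have hx_far : ¬ w.IsUnit₁ ((n : ℤ) + 1) (x / e₂) :=
    fun h ↦ hχx (DValuation.map_eq_map_of_isUnit₁_div hχ hn hvan he₂ h)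
  have hquot : w.IsUnit₁ ((n : ℤ) + 1) ((x - e₁) / (x - e₂)) :=
    DValuation.IsUnit₁.sub_div_sub he₂ (by rwa [← add_assoc, ← two_mul]) hx_far
  obtain ⟨hxe₁, hxe₂⟩ : x - e₁ ≠ 0 ∧ x - e₂ ≠ 0 := div_ne_zero_iff.mp (hquot.ne_zero hn)
  have hχ_eq : χ (x - e₁) = χ (x - e₂) :=
    DValuation.map_eq_map_of_isUnit₁_div hχ hn hvan hxe₂ hquot
  refine ⟨hχ_eq, ?_⟩
  rw [hχ (mul_ne_zero hx hxe₁) hxe₂, hχ hx hxe₁, hχ_eq, add_assoc, ZModModule.add_self, add_zero]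

/-- The key computation in the proof of case (i) of Proposition 4:
`χ : K^× → ℤ/2ℤ` a homomorphism vanishing on `U_{n+1}` (`n ≥ 1`),
`e₁, e₂` distinct `1`-units with `e₁/e₂ ∈ U_{2n+1}` (i.e. `v(e₁−e₂) ≥ 2n+1`)
and `χ(e₁) = χ(e₂) = 0`.  If `x ∈ K^×`, `x ≠ e₁`, `x ≠ e₂`,
`−n ≤ v(x) ≤ n` and `χ(x) = 1`, then `χ(x−e₁) = χ(x−e₂)`; in particular
`χ(x(x−e₁)(x−e₂)) = 1`. -/
theorem chatelet_case_i_key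
    (K : Type*) [Field K] [Algebra ℚ_[2] K] [FiniteDimensional ℚ_[2] K]
    (w : DValuation K)
    (hext : ∀ x : ℚ_[2], x ≠ 0 →
      w.v (algebraMap ℚ_[2] K x) = w.v (algebraMap ℚ_[2] K 2) * x.valuation)
    (χ : K → ZMod 2)
    (hχ : ∀ ⦃x y : K⦄, x ≠ 0 → y ≠ 0 → χ (x * y) = χ x + χ y)
    (n : ℕ) (hn : 1 ≤ n)
    (hvan : ∀ u : K, w.IsUnit₁ ((n : ℤ) + 1) u → χ u = 0)
    (e₁ e₂ : K) (he₁ : w.IsUnit₁ 1 e₁) (he₂ : w.IsUnit₁ 1 e₂) (hee : e₁ ≠ e₂)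
    (hcong : w.IsUnit₁ (2 * (n : ℤ) + 1) (e₁ / e₂))
    (hχe₁ : χ e₁ = 0) (hχe₂ : χ e₂ = 0)
    (x : K) (hx0 : x ≠ 0) (hxe₁ : x ≠ e₁) (hxe₂ : x ≠ e₂)
    (hv₁ : -(n : ℤ) ≤ w.v x) (hv₂ : w.v x ≤ (n : ℤ)) (hχx : χ x = 1) :
    χ (x - e₁) = χ (x - e₂) ∧ χ (x * (x - e₁) * (x - e₂)) = 1 := by
  rw [← hχx]
  exact chatelet_case_i_key_general hχ hvan (he₂.ne_zero one_pos) hcong hx0 (by simp [hχx, hχe₂])
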